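/- The 3-dimensional node, i.e., the set of (u,v) in R^4 × R^4 satisfying |u|^2 - |v|^2 = 0 and ⟨u,v⟩ = 0, is homeomorphic to the cone over S^3 × S^2, namely to the quotient of ([0,∞) × S^3 × S^2) obtained by collapsing {0} × S^3 × S^2 to a point. -/

import Mathlib

open scoped RealInnerProductSpace

/-- The topological cone over `X`: the quotient of `[0,∞) × X` collapsing `{0} × X`
to a point. -/
def coneSetoid (X : Type*) : Setoid ({t : ℝ // 0 ≤ t} × X) where
  r a b := a = b ∨ (a.1.1 = 0 ∧ b.1.1 = 0)
  iseqv := by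
    constructor
    · intro a; exact Or.inl rfl
    · intro a b h
      rcases h with h | h
      · exact Or.inl h.symm
      · exact Or.inr ⟨h.2, h.1⟩
    · intro a b c hab hbc
      rcases hab with h | h
      · subst h; exact hbc
      · rcases hbc with h' | h'
        · subst h'; exact Or.inr h
        · exact Or.inr ⟨h.1, h'.2⟩

def TopCone (X : Type*) [TopologicalSpace X] : Type _ := Quotient (coneSetoid X)

instance (X : Type*) [TopologicalSpace X] : TopologicalSpace (TopCone X) :=
  instTopologicalSpaceQuotient

/-!
The node is invariant under nonnegative scaling, and such a set is the cone over its link with the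
unit sphere as soon as the link is compact and nonempty: `[t, x] ↦ t • x` is a continuous bijection,
and it is proper because `‖t • x‖ = t`. For the sup norm on `E × E`, the link of the node consists
of the orthonormal pairs. Identify `ℝ⁴` with the quaternions `ℍ`. Left multiplication by a unit
quaternion `u` is an isometry taking `1` to `u`, hence takes the unit sphere of the imaginary
quaternions `1ᗮ` onto the unit vectors orthogonal to `u`; so `(u, w) ↦ (u, u * w)` identifies
`S³ × S²` with the orthonormal pairs.
-/

open Function Metric Module Set
open scoped Quaternion

namespace TopCone

section Radial

variable {X V : Type*} [TopologicalSpace X] [NormedAddCommGroup V] [NormedSpace ℝ V] {f : X → V}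

/-- The map `[t, x] ↦ t • f x` on the topological cone over `X`: the extension of `f : X → V` that
is linear along each ray. -/
def radialExtension (f : X → V) : TopCone X → V :=
  Quotient.lift (fun a ↦ (a.1 : ℝ) • f a.2) <| by
    rintro a b (rfl | ⟨ha, hb⟩)
    · rfl
    · simp only [ha, hb, zero_smul]

lemma continuous_radialExtension (hf : Continuous f) : Continuous (radialExtension f) :=
  Continuous.quotient_lift (by fun_prop) _

lemma radialExtension_injective (hf : Injective f) (hnorm : ∀ x, ‖f x‖ = 1) :
    Injective (radialExtension f) := by
  rintro ⟨⟨t, ht⟩, x⟩ ⟨⟨s, hs⟩, y⟩ (h : t • f x = s • f y)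
  have hts : t = s := by
    simpa [norm_smul, hnorm, abs_of_nonneg, ht, hs] using congrArg norm h
  subst hts
  rcases eq_or_ne t 0 with h0 | h0
  · exact Quotient.sound (Or.inr ⟨h0, h0⟩)
  · rw [hf (smul_right_injective V h0 h)]

lemma isProperMap_smul [CompactSpace X] (hf : Continuous f) (hnorm : ∀ x, ‖f x‖ = 1) :
    IsProperMap fun a : {t : ℝ // 0 ≤ t} × X ↦ (a.1 : ℝ) • f a.2 := by
  refine isProperMap_of_comp_of_t2 (by fun_prop) continuous_norm ?_
  have hcomp : (norm ∘ fun a : {t : ℝ // 0 ≤ t} × X ↦ (a.1 : ℝ) • f a.2) =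
      Subtype.val ∘ Prod.fst := by
    funext a
    rw [comp_apply, norm_smul, hnorm, mul_one, Real.norm_of_nonneg a.1.2, comp_apply]
  rw [hcomp]
  exact isClosed_Ici.isClosedEmbedding_subtypeVal.isProperMap.comp isProperMap_fst_of_compactSpace

lemma isClosedEmbedding_radialExtension [CompactSpace X] (hf : Continuous f)
    (hinj : Injective f) (hnorm : ∀ x, ‖f x‖ = 1) :
    Topology.IsClosedEmbedding (radialExtension f) :=
  .of_continuous_injective_isClosedMap (continuous_radialExtension hf)
    (radialExtension_injective hinj hnorm)
    (.of_comp_surjective Quotient.mk_surjective continuous_quotient_mk'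
      (isProperMap_smul hf hnorm).isClosedMap)

lemma range_radialExtension [Nonempty X] {C : Set V} (hC : ∀ t : ℝ, 0 ≤ t → ∀ v ∈ C, t • v ∈ C)
    (hf : range f = C ∩ sphere 0 1) : range (radialExtension f) = C := by
  have hmem (x : X) : f x ∈ C := (hf.subset (mem_range_self x)).1
  refine Subset.antisymm ?_ fun v hv ↦ ?_
  · rintro _ ⟨⟨t, x⟩, rfl⟩
    exact hC t t.2 _ (hmem x)
  · rcases eq_or_ne v 0 with rfl | hv0
    · exact ⟨Quotient.mk _ (⟨0, le_rfl⟩, Classical.arbitrary X), zero_smul ℝ _⟩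
    · have hunit : ‖v‖⁻¹ • v ∈ range f :=
        hf ▸ ⟨hC _ (by positivity) v hv, by simp [norm_smul, hv0]⟩
      obtain ⟨x, hx⟩ := hunit
      refine ⟨Quotient.mk _ (⟨‖v‖, norm_nonneg v⟩, x), ?_⟩
      change ‖v‖ • f x = v
      rw [hx, smul_inv_smul₀ (norm_ne_zero_iff.mpr hv0)]

/-- A set closed under nonnegative scaling is homeomorphic to the topological cone over its link
with the unit sphere, if the link is compact and nonempty. The link is given up to a homeomorphism
`e`. -/
noncomputable def homeomorphOfLink [CompactSpace X] [Nonempty X] {C : Set V}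
    (hC : ∀ t : ℝ, 0 ≤ t → ∀ v ∈ C, t • v ∈ C) (e : X ≃ₜ ↥(C ∩ sphere 0 1)) : TopCone X ≃ₜ C :=
  have hrange : range (fun x ↦ (e x : V)) = C ∩ sphere 0 1 := by
    rw [← comp_def, e.surjective.range_comp, Subtype.range_coe]
  have hembedding := isClosedEmbedding_radialExtension (f := fun x ↦ (e x : V)) (by fun_prop)
    (Subtype.val_injective.comp e.injective) fun x ↦ mem_sphere_zero_iff_norm.mp (e x).2.2
  hembedding.isEmbedding.toHomeomorph.trans (.setCongr (range_radialExtension hC hrange))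

end Radial

end TopCone

section Node

variable {E F : Type*} [NormedAddCommGroup E] [InnerProductSpace ℝ E]
  [NormedAddCommGroup F] [InnerProductSpace ℝ F]

variable (E) in
/-- The node in `E × E`: pairs of orthogonal vectors of the same length. -/
def node : Set (E × E) :=
  {p | ‖p.1‖ ^ 2 - ‖p.2‖ ^ 2 = 0 ∧ ⟪p.1, p.2⟫ = 0}

lemma mem_node_iff {p : E × E} : p ∈ node E ↔ ‖p.1‖ = ‖p.2‖ ∧ ⟪p.1, p.2⟫ = 0 := by
  rw [node, mem_ofPred_eq, sub_eq_zero, sq_eq_sq₀ (norm_nonneg _) (norm_nonneg _)]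

lemma smul_mem_node (t : ℝ) {p : E × E} (hp : p ∈ node E) : t • p ∈ node E := by
  rw [mem_node_iff] at hp ⊢
  simp [norm_smul, real_inner_smul_left, real_inner_smul_right, hp.1, hp.2]

lemma mem_node_inter_sphere_iff {p : E × E} :
    p ∈ node E ∩ sphere 0 1 ↔ ‖p.1‖ = 1 ∧ ‖p.2‖ = 1 ∧ ⟪p.1, p.2⟫ = 0 := by
  rw [mem_inter_iff, mem_node_iff, mem_sphere_zero_iff_norm, Prod.norm_def]
  constructor
  · rintro ⟨⟨hnorm, horth⟩, hmax⟩
    rw [← hnorm, max_self] at hmax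
    exact ⟨hmax, hnorm ▸ hmax, horth⟩
  · rintro ⟨h₁, h₂, horth⟩
    simp [h₁, h₂, horth]

lemma fst_ne_zero_of_mem_node_inter_sphere {p : E × E} (hp : p ∈ node E ∩ sphere 0 1) :
    p.1 ≠ 0 := by
  rw [← norm_ne_zero_iff, (mem_node_inter_sphere_iff.mp hp).1]
  exact one_ne_zero

/-- A linear isometry equivalence induces a homeomorphism between the nodes. -/
def nodeCongr (f : E ≃ₗᵢ[ℝ] F) : node E ≃ₜ node F :=
  (f.toHomeomorph.prodCongr f.toHomeomorph).subtype fun p ↦ by simp [mem_node_iff]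

/-- A linear isometry equivalence induces a homeomorphism between the unit spheres. -/
def unitSphereCongr (f : E ≃ₗᵢ[ℝ] F) : sphere (0 : E) 1 ≃ₜ sphere (0 : F) 1 :=
  f.toHomeomorph.subtype fun v ↦ by simp

/-- The node in `E × E` is homeomorphic to the topological cone over the space of orthonormal pairs
in `E`, if that space is compact and nonempty. It is given up to a homeomorphism `e`. -/
noncomputable def nodeHomeomorphTopCone {X : Type*} [TopologicalSpace X] [CompactSpace X]
    [Nonempty X] (e : X ≃ₜ ↥(node E ∩ sphere 0 1)) : node E ≃ₜ TopCone X :=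
  (TopCone.homeomorphOfLink (C := node E) (fun t _ _ ↦ smul_mem_node t) e).symm

end Node

section DivisionRing

variable {A : Type*} [NormedDivisionRing A] [InnerProductSpace ℝ A]

lemma real_inner_mul_left_mul_left (u v w : A) : ⟪u * v, u * w⟫ = ‖u‖ ^ 2 * ⟪v, w⟫ := by
  simp only [real_inner_eq_norm_add_mul_self_sub_norm_mul_self_sub_norm_mul_self_div_two,
    ← mul_add, norm_mul]
  ring

lemma real_inner_self_mul (u w : A) : ⟪u, u * w⟫ = ‖u‖ ^ 2 * ⟪1, w⟫ := by
  simpa only [mul_one] using real_inner_mul_left_mul_left u 1 w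

lemma inv_mul_mem_orthogonal_one {p : A × A} (hp : p ∈ node A ∩ sphere 0 1) :
    p.1⁻¹ * p.2 ∈ (ℝ ∙ (1 : A))ᗮ := by
  rw [Submodule.mem_orthogonal_singleton_iff_inner_right,
    ← inv_mul_cancel₀ (fst_ne_zero_of_mem_node_inter_sphere hp), real_inner_mul_left_mul_left,
    (mem_node_inter_sphere_iff.mp hp).2.2, mul_zero]

variable (A) in
/-- The homeomorphism `(u, w) ↦ (u, u * w)` onto the orthonormal pairs of a normed division ring,
for `u` in the unit sphere and `w` in the unit sphere of the orthogonal complement of `1`. -/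
def unitSphereProdHomeomorphNodeLink :
    sphere (0 : A) 1 × sphere (0 : (ℝ ∙ (1 : A))ᗮ) 1 ≃ₜ ↥(node A ∩ sphere 0 1) where
  toFun x := ⟨(x.1, x.1 * (x.2 : (ℝ ∙ (1 : A))ᗮ)), by
    have hw : ⟪(1 : A), x.2⟫ = 0 := Submodule.mem_orthogonal_singleton_iff_inner_right.mp x.2.1.2
    have hw_norm : ‖(x.2.1 : A)‖ = 1 := norm_eq_of_mem_sphere x.2
    rw [mem_node_inter_sphere_iff]
    simp [real_inner_self_mul, hw, hw_norm]⟩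
  invFun p :=
    (⟨p.1.1, by simp [(mem_node_inter_sphere_iff.mp p.2).1]⟩,
      ⟨⟨p.1.1⁻¹ * p.1.2, inv_mul_mem_orthogonal_one p.2⟩, by
        obtain ⟨hu_norm, hv_norm, -⟩ := mem_node_inter_sphere_iff.mp p.2
        simp [hu_norm, hv_norm]⟩)
  left_inv x := by
    have hu : (x.1 : A) ≠ 0 := ne_zero_of_mem_unit_sphere x.1
    ext <;> simp [inv_mul_cancel_left₀ hu]
  right_inv p := by
    have hu := fst_ne_zero_of_mem_node_inter_sphere p.2
    ext <;> simp [mul_inv_cancel_left₀ hu]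
  continuous_toFun := by fun_prop
  continuous_invFun := by
    have hinv : Continuous fun p : ↥(node A ∩ sphere 0 1) ↦ p.1.1⁻¹ :=
      .inv₀ (by fun_prop) fun p ↦ fst_ne_zero_of_mem_node_inter_sphere p.2
    fun_prop

end DivisionRing

/-- The 3-dimensional node `{(u,v) ∈ ℝ⁴ × ℝ⁴ : |u|² - |v|² = 0, ⟨u,v⟩ = 0}` is
homeomorphic to the cone over `S³ × S²`. -/
theorem stmt_3 :
    Nonempty
      ({p : EuclideanSpace ℝ (Fin 4) × EuclideanSpace ℝ (Fin 4) //
          ‖p.1‖ ^ 2 - ‖p.2‖ ^ 2 = 0 ∧ ⟪p.1, p.2⟫ = 0} ≃ₜ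
        TopCone (Metric.sphere (0 : EuclideanSpace ℝ (Fin 4)) 1 ×
          Metric.sphere (0 : EuclideanSpace ℝ (Fin 3)) 1)) := by
  have hdim : Fact (finrank ℝ ℍ = 3 + 1) := ⟨Quaternion.finrank_eq_four⟩
  let quaternions : ℍ ≃ₗᵢ[ℝ] EuclideanSpace ℝ (Fin 4) := Quaternion.linearIsometryEquivTuple
  let imaginary : (ℝ ∙ (1 : ℍ))ᗮ ≃ₗᵢ[ℝ] EuclideanSpace ℝ (Fin 3) :=
    (OrthonormalBasis.fromOrthogonalSpanSingleton 3 one_ne_zero).repr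
  let link := ((unitSphereCongr quaternions).prodCongr (unitSphereCongr imaginary)).symm.trans
    (unitSphereProdHomeomorphNodeLink ℍ)
  have hsphere (n : ℕ) : Nonempty (sphere (0 : EuclideanSpace ℝ (Fin (n + 1))) 1) :=
    (NormedSpace.sphere_nonempty.mpr zero_le_one).to_subtype
  have := hsphere 3
  have := hsphere 2
  exact ⟨(nodeCongr quaternions).symm.trans (nodeHomeomorphTopCone link)⟩
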